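/- The Poincaré return map of the rotating Kepler problem is a well-defined self-map of the page of the geodesic open book: for every (ξ, η) ∈ P, the point f(ξ, η) = (ξ₀, R_{T(c−L(ξ,η))}(ξ₁, ξ₂), 0; η₀, R_{T(c−L(ξ,η))}(η₁, η₂), η₃) again lies in P; that is, writing f(ξ,η) = (ξ', η'), one has ⟨ξ', η'⟩ = 0, ‖ξ'‖ = 1, Q(ξ', η') = ½, ξ₃' = 0 and η₃' ≥ 0. -/

import Mathlib

noncomputable section

/-- Phase-space points: pairs `(ξ, η) ∈ ℝ⁴ × ℝ⁴`. -/
abbrev Pt := (Fin 4 → ℝ) × (Fin 4 → ℝ)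

/-- Euclidean norm on `ℝ⁴` (written componentwise). -/
def nrm4 (v : Fin 4 → ℝ) : ℝ := Real.sqrt (v 0 ^ 2 + v 1 ^ 2 + v 2 ^ 2 + v 3 ^ 2)

/-- Euclidean inner product on `ℝ⁴`. -/
def inner4 (v w : Fin 4 → ℝ) : ℝ := v 0 * w 0 + v 1 * w 1 + v 2 * w 2 + v 3 * w 3

/-- The angular momentum `L(ξ,η) = ξ₂η₁ − ξ₁η₂`. -/
def angL (x : Pt) : ℝ := x.1 2 * x.2 1 - x.1 1 * x.2 2

/-- `f̂(ξ,η) = 1 + (1 − ξ₀)(−c − ½ + L(ξ,η))`. -/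
def fhat (c : ℝ) (x : Pt) : ℝ := 1 + (1 - x.1 0) * (-c - 1 / 2 + angL x)

/-- The Moser-regularized rotating Kepler Hamiltonian `Q(ξ,η) = ½ f̂(ξ,η)² ‖η‖²`. -/
def Qham (c : ℝ) (x : Pt) : ℝ := (1 / 2) * (fhat c x) ^ 2 * (nrm4 x.2) ^ 2

/-- The period `T(K) = π/(2(−K)^{3/2})` of a Kepler ellipse of energy `K < 0`,
extended by `0` for `K ≥ 0`. -/
def period (K : ℝ) : ℝ :=
  if K < 0 then Real.pi / (2 * (-K) ^ ((3 : ℝ) / 2)) else 0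

/-- Rotation of `ℝ²` by angle `φ`. -/
def Rot (φ : ℝ) (a b : ℝ) : ℝ × ℝ :=
  (Real.cos φ * a - Real.sin φ * b, Real.sin φ * a + Real.cos φ * b)

/-- Membership in the page `P = {(ξ,η) ∈ T*S³ : Q = ½, ξ₃ = 0, η₃ ≥ 0}`, where
`T*S³ = {(ξ,η) : ⟨ξ,η⟩ = 0, ‖ξ‖ = 1}`. -/
def memP (c : ℝ) (x : Pt) : Prop :=
  inner4 x.1 x.2 = 0 ∧ nrm4 x.1 = 1 ∧ Qham c x = 1 / 2 ∧ x.1 3 = 0 ∧ 0 ≤ x.2 3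

/-- Membership in the collision locus `C = {(ξ,η) ∈ P : ξ₀ = 1}`. -/
def memC (c : ℝ) (x : Pt) : Prop := memP c x ∧ x.1 0 = 1

/-- The Poincaré return map
`f(ξ₀,ξ₁,ξ₂,0; η₀,η₁,η₂,η₃) = (ξ₀, R_{T(c−L)}(ξ₁,ξ₂), 0; η₀, R_{T(c−L)}(η₁,η₂), η₃)`. -/
def ret (c : ℝ) (x : Pt) : Pt :=
  (![x.1 0, (Rot (period (c - angL x)) (x.1 1) (x.1 2)).1,
      (Rot (period (c - angL x)) (x.1 1) (x.1 2)).2, 0],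
   ![x.2 0, (Rot (period (c - angL x)) (x.2 1) (x.2 2)).1,
      (Rot (period (c - angL x)) (x.2 1) (x.2 2)).2, x.2 3])

/-! On the page `ξ₃ = 0`, so the return map turns `ξ` and `η` by one and the same angle in the
`(1, 2)`-plane. The angle depends on the point, but every function defining the page is invariant
under simultaneous rotation by any angle: rotations preserve dot products, and `L` is a signed
area in the rotated plane. -/

theorem rot_dot_rot (φ a b a' b' : ℝ) :
    (Rot φ a b).1 * (Rot φ a' b').1 + (Rot φ a b).2 * (Rot φ a' b').2 = a * a' + b * b' := by
  simp only [Rot]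
  linear_combination (a * a' + b * b') * Real.sin_sq_add_cos_sq φ

theorem rot_cross_rot (φ a b a' b' : ℝ) :
    (Rot φ a b).2 * (Rot φ a' b').1 - (Rot φ a b).1 * (Rot φ a' b').2 = b * a' - a * b' := by
  simp only [Rot]
  linear_combination (b * a' - a * b') * Real.sin_sq_add_cos_sq φ

theorem nrm4_eq_sqrt_inner4 (v : Fin 4 → ℝ) : nrm4 v = √(inner4 v v) := by
  simp only [nrm4, inner4, sq]

/-- Rotation of `ℝ⁴` by the angle `φ` in the plane of the coordinates `1` and `2`. -/
def planeRotation (φ : ℝ) (v : Fin 4 → ℝ) : Fin 4 → ℝ :=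
  ![v 0, (Rot φ (v 1) (v 2)).1, (Rot φ (v 1) (v 2)).2, v 3]

theorem inner4_planeRotation (φ : ℝ) (v w : Fin 4 → ℝ) :
    inner4 (planeRotation φ v) (planeRotation φ w) = inner4 v w := by
  simp only [inner4, planeRotation, Matrix.cons_val]
  linear_combination rot_dot_rot φ (v 1) (v 2) (w 1) (w 2)

theorem nrm4_planeRotation (φ : ℝ) (v : Fin 4 → ℝ) : nrm4 (planeRotation φ v) = nrm4 v := by
  simp only [nrm4_eq_sqrt_inner4, inner4_planeRotation]

/-- The phase-space rotation induced by `planeRotation φ`: position and momentum turn together. -/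
def phaseRotation (φ : ℝ) (x : Pt) : Pt :=
  (planeRotation φ x.1, planeRotation φ x.2)

theorem angL_phaseRotation (φ : ℝ) (x : Pt) : angL (phaseRotation φ x) = angL x :=
  rot_cross_rot φ (x.1 1) (x.1 2) (x.2 1) (x.2 2)

theorem fhat_phaseRotation (c φ : ℝ) (x : Pt) : fhat c (phaseRotation φ x) = fhat c x := by
  have h₀ : (phaseRotation φ x).1 0 = x.1 0 := rfl
  simp only [fhat, angL_phaseRotation, h₀]

theorem Qham_phaseRotation (c φ : ℝ) (x : Pt) : Qham c (phaseRotation φ x) = Qham c x := by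
  have hη : nrm4 (phaseRotation φ x).2 = nrm4 x.2 := nrm4_planeRotation φ x.2
  simp only [Qham, fhat_phaseRotation, hη]

theorem memP_phaseRotation_iff (c φ : ℝ) (x : Pt) : memP c (phaseRotation φ x) ↔ memP c x := by
  have hinner : inner4 (phaseRotation φ x).1 (phaseRotation φ x).2 = inner4 x.1 x.2 :=
    inner4_planeRotation φ x.1 x.2
  have hξ : nrm4 (phaseRotation φ x).1 = nrm4 x.1 := nrm4_planeRotation φ x.1
  have hξ₃ : (phaseRotation φ x).1 3 = x.1 3 := rfl
  have hη₃ : (phaseRotation φ x).2 3 = x.2 3 := rfl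
  simp only [memP, hinner, hξ, Qham_phaseRotation, hξ₃, hη₃]

theorem ret_eq_phaseRotation (c : ℝ) {x : Pt} (hξ₃ : x.1 3 = 0) :
    ret c x = phaseRotation (period (c - angL x)) x := by
  simp only [ret, phaseRotation, planeRotation, hξ₃]

theorem return_map_maps_page_to_page_general (c : ℝ) (x : Pt) (hx : memP c x) :
    memP c (ret c x) := by
  have hξ₃ : x.1 3 = 0 := hx.2.2.2.1
  rw [ret_eq_phaseRotation c hξ₃]
  exact (memP_phaseRotation_iff c _ x).mpr hx

/-- the Poincaré return map is a well-defined self-map of the page. -/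
theorem return_map_maps_page_to_page
    (c : ℝ) (hc : c < -(3 / 2)) (x : Pt) (hx : memP c x) :
    memP c (ret c x) :=
  return_map_maps_page_to_page_general c x hx

end
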